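/- Let (h_n, u_n, f_n) be a contradiction sequence and let χ ∈ C_c^∞(ℝ) with χ(z) = 1 for |z| ≤ 1 and χ(z) = 0 for |z| ≥ 2. Set w_n := (1 − χ(a/h_n))·u_n. Then: (i) ‖w_n‖_{L²} + ‖h_n∇w_n‖_{L²} = o(h_n^{1/2}) as n → ∞; and (ii) for every c > 0, ∫_{{x : a(x) ≥ c·h_n}} (|u_n|² + ‖h_n∇u_n‖²) dx = o(h_n) as n → ∞. -/

import Mathlib

open MeasureTheory Complex ComplexConjugate

noncomputable section

/-- Partial derivative `∂u/∂xᵢ` of a complex-valued function on `ℝ^d`. -/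
def pd {d : ℕ} (i : Fin d) (u : EuclideanSpace ℝ (Fin d) → ℂ)
    (x : EuclideanSpace ℝ (Fin d)) : ℂ :=
  fderiv ℝ u x (EuclideanSpace.single i (1 : ℝ))

/-- Laplacian `Δu = ∑ᵢ ∂²u/∂xᵢ²` of a complex-valued function on `ℝ^d`. -/
def lap {d : ℕ} (u : EuclideanSpace ℝ (Fin d) → ℂ)
    (x : EuclideanSpace ℝ (Fin d)) : ℂ :=
  ∑ i : Fin d, pd i (pd i u) x

/-- The semiclassical Kelvin–Voigt operator
`P_h u = -h²Δu - u - i h (∇a·∇u + a Δu)`. -/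
def Ph {d : ℕ} (h : ℝ) (a : EuclideanSpace ℝ (Fin d) → ℝ)
    (u : EuclideanSpace ℝ (Fin d) → ℂ) (x : EuclideanSpace ℝ (Fin d)) : ℂ :=
  -(h ^ 2 : ℂ) * lap u x - u x -
    Complex.I * (h : ℂ) *
      ((∑ i : Fin d, (fderiv ℝ a x (EuclideanSpace.single i (1 : ℝ)) : ℂ) * pd i u x) +
        (a x : ℂ) * lap u x)

open Filter Asymptotics

section KelvinVoigtEstimates

variable {d : ℕ}

lemma ContDiff.pd {m n : WithTop ℕ∞} {u : EuclideanSpace ℝ (Fin d) → ℂ} (hu : ContDiff ℝ n u)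
    (hmn : m + 1 ≤ n) (i : Fin d) : ContDiff ℝ m (pd i u) :=
  (hu.fderiv_right hmn).clm_apply contDiff_const

lemma pd_eq_zero_of_notMem_tsupport {u : EuclideanSpace ℝ (Fin d) → ℂ}
    {x : EuclideanSpace ℝ (Fin d)} (i : Fin d) (hx : x ∉ tsupport u) : pd i u x = 0 := by
  rw [pd, (notMem_tsupport_iff_eventuallyEq.1 hx).fderiv_eq]
  simp

lemma HasCompactSupport.pd {u : EuclideanSpace ℝ (Fin d) → ℂ} (hu : HasCompactSupport u)
    (i : Fin d) : HasCompactSupport (pd i u) :=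
  HasCompactSupport.intro hu fun _ hx => pd_eq_zero_of_notMem_tsupport i hx

lemma pd_mul {f g : EuclideanSpace ℝ (Fin d) → ℂ} {x : EuclideanSpace ℝ (Fin d)}
    (hf : DifferentiableAt ℝ f x) (hg : DifferentiableAt ℝ g x) (i : Fin d) :
    pd i (fun y => f y * g y) x = pd i f x * g x + f x * pd i g x := by
  unfold pd
  rw [fderiv_fun_mul hf hg]
  simp only [add_apply, smul_apply, smul_eq_mul]
  ring

lemma pd_ofReal {a : EuclideanSpace ℝ (Fin d) → ℝ} {x : EuclideanSpace ℝ (Fin d)}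
    (ha : DifferentiableAt ℝ a x) (i : Fin d) :
    pd i (fun y => (a y : ℂ)) x = (fderiv ℝ a x (EuclideanSpace.single i 1) : ℝ) := by
  have := (ofRealCLM.hasFDerivAt.comp x ha.hasFDerivAt).fderiv
  have h2 : (fun y => (a y : ℂ)) = ofRealCLM ∘ a := rfl
  rw [pd, h2, this]
  simp

lemma pd_conj {u : EuclideanSpace ℝ (Fin d) → ℂ} {x : EuclideanSpace ℝ (Fin d)}
    (hu : DifferentiableAt ℝ u x) (i : Fin d) :
    pd i (fun y => conj (u y)) x = conj (pd i u x) := by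
  have := (conjCLE.toContinuousLinearMap.hasFDerivAt.comp x hu.hasFDerivAt).fderiv
  have h2 : (fun y => conj (u y)) = conjCLE.toContinuousLinearMap ∘ u := rfl
  rw [pd, h2, this]
  simp [pd]

lemma integral_pd_mul_eq_neg {f g : EuclideanSpace ℝ (Fin d) → ℂ}
    (hf : ContDiff ℝ 1 f) (hfs : HasCompactSupport f) (hg : ContDiff ℝ 1 g) (i : Fin d) :
    ∫ x, pd i f x * g x = -∫ x, f x * pd i g x := by
  have hf' := (hf.pd (m := 0) (by simp) i).continuous
  have hg' := (hg.pd (m := 0) (by simp) i).continuous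
  rw [eq_neg_iff_add_eq_zero, add_comm, ← eq_neg_iff_add_eq_zero]
  exact integral_mul_fderiv_eq_neg_fderiv_mul_of_integrable
    ((hf'.mul hg.continuous).integrable_of_hasCompactSupport ((hfs.pd i).mul_right))
    ((hf.continuous.mul hg').integrable_of_hasCompactSupport hfs.mul_right)
    ((hf.continuous.mul hg.continuous).integrable_of_hasCompactSupport hfs.mul_right)
    (fun x _ => hf.differentiable one_ne_zero x) (fun x _ => hg.differentiable one_ne_zero x)

lemma Ph_eq_sum_pd {a : EuclideanSpace ℝ (Fin d) → ℝ} (ha : ContDiff ℝ 1 a)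
    {u : EuclideanSpace ℝ (Fin d) → ℂ} (hu : ContDiff ℝ 2 u) (h : ℝ)
    (x : EuclideanSpace ℝ (Fin d)) :
    Ph h a u x =
      -∑ i, pd i (fun y => ((h : ℂ) ^ 2 + I * h * a y) * pd i u y) x - u x := by
  have had := ha.differentiable one_ne_zero
  have hsum (i : Fin d) : pd i (fun y => ((h : ℂ) ^ 2 + I * h * a y) * pd i u y) x =
      I * h * ((fderiv ℝ a x (EuclideanSpace.single i 1) : ℝ) * pd i u x) +
        ((h : ℂ) ^ 2 + I * h * a x) * pd i (pd i u) x := by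
    have hadc : DifferentiableAt ℝ (fun y => (a y : ℂ)) x :=
      ofRealCLM.differentiableAt.comp x (had x)
    have hud : DifferentiableAt ℝ (pd i u) x :=
      (hu.pd (m := 1) (by norm_num) i).differentiable one_ne_zero x
    rw [pd_mul (by fun_prop) hud]
    congr 1
    have h1 : pd i (fun y => (h : ℂ) ^ 2 + I * h * a y) x =
        I * h * (fderiv ℝ a x (EuclideanSpace.single i 1) : ℝ) := by
      rw [← pd_ofReal (had x)]
      unfold pd
      rw [fderiv_const_add, fderiv_const_mul hadc]
      simp
    rw [h1]
    ring
  simp_rw [hsum, Finset.sum_add_distrib, ← Finset.mul_sum]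
  rw [Ph, lap]
  ring

lemma continuous_Ph {a : EuclideanSpace ℝ (Fin d) → ℝ} (ha : ContDiff ℝ 1 a)
    {u : EuclideanSpace ℝ (Fin d) → ℂ} (hu : ContDiff ℝ 2 u) (h : ℝ) :
    Continuous (Ph h a u) := by
  have h1 (i : Fin d) := (hu.pd (m := 1) (by norm_num) i)
  have h2 (i : Fin d) := ((h1 i).pd (m := 0) (by simp) i).continuous
  have h3 (i : Fin d) := (h1 i).continuous
  have h4 := hu.continuous
  have h5 := ha.continuous
  have h6 := ha.continuous_fderiv one_ne_zero
  unfold Ph lap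
  fun_prop

lemma Ph_eq_zero_of_notMem_tsupport {u : EuclideanSpace ℝ (Fin d) → ℂ}
    {x : EuclideanSpace ℝ (Fin d)} (h : ℝ) (a : EuclideanSpace ℝ (Fin d) → ℝ)
    (hx : x ∉ tsupport u) : Ph h a u x = 0 := by
  have h2 (i : Fin d) : pd i (pd i u) x = 0 := by
    refine pd_eq_zero_of_notMem_tsupport i fun hx' => hx ?_
    refine closure_minimal (fun y hy => ?_) (isClosed_tsupport u) hx'
    by_contra hyu
    exact hy (pd_eq_zero_of_notMem_tsupport i hyu)
  simp [Ph, lap, h2, pd_eq_zero_of_notMem_tsupport _ hx, image_eq_zero_of_notMem_tsupport hx]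

/-- Weak form of `Ph h a u` tested against a `C¹` function. -/
lemma integral_Ph_mul_eq {a : EuclideanSpace ℝ (Fin d) → ℝ} (ha : ContDiff ℝ 1 a)
    {u v : EuclideanSpace ℝ (Fin d) → ℂ} (hu : ContDiff ℝ 2 u) (hus : HasCompactSupport u)
    (hv : ContDiff ℝ 1 v) (h : ℝ) :
    ∫ x, Ph h a u x * v x =
      ∫ x, ((∑ i, ((h : ℂ) ^ 2 + I * h * a x) * pd i u x * pd i v x) - u x * v x) := by
  have hpu (i : Fin d) : ContDiff ℝ 1 (pd i u) := hu.pd (by norm_num) i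
  have hG (i : Fin d) : ContDiff ℝ 1 (fun y => ((h : ℂ) ^ 2 + I * h * a y) * pd i u y) :=
    (contDiff_const.add (contDiff_const.mul (ofRealCLM.contDiff.comp ha))).mul (hpu i)
  have hGs (i : Fin d) :
      HasCompactSupport (fun y => ((h : ℂ) ^ 2 + I * h * a y) * pd i u y) :=
    (hus.pd i).mul_left
  have hI (i : Fin d) : Integrable fun x =>
      pd i (fun y => ((h : ℂ) ^ 2 + I * h * a y) * pd i u y) x * v x :=
    ((((hG i).pd (m := 0) (by simp) i).continuous).mul
      hv.continuous).integrable_of_hasCompactSupport ((hGs i).pd i).mul_right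
  have hJ (i : Fin d) : Integrable fun x =>
      ((h : ℂ) ^ 2 + I * h * a x) * pd i u x * pd i v x :=
    ((hG i).continuous.mul
      (hv.pd (m := 0) (by simp) i).continuous).integrable_of_hasCompactSupport (hGs i).mul_right
  have huv : Integrable fun x => u x * v x :=
    (hu.continuous.mul hv.continuous).integrable_of_hasCompactSupport hus.mul_right
  have hrw (x : EuclideanSpace ℝ (Fin d)) : Ph h a u x * v x =
      -(∑ i, pd i (fun y => ((h : ℂ) ^ 2 + I * h * a y) * pd i u y) x * v x) - u x * v x := by
    rw [Ph_eq_sum_pd ha hu, ← Finset.sum_mul]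
    ring
  simp_rw [hrw]
  have hIs := (integrable_finsetSum Finset.univ fun i _ => hI i).fun_neg
  rw [integral_sub hIs huv, integral_neg,
    integral_sub (integrable_finsetSum _ fun i _ => hJ i) huv,
    integral_finsetSum _ fun i _ => hI i, integral_finsetSum _ fun i _ => hJ i]
  simp_rw [integral_pd_mul_eq_neg (hG _) (hGs _) hv]
  simp

lemma integral_mul_le_sqrt_mul_sqrt {f g : EuclideanSpace ℝ (Fin d) → ℝ}
    (hf : Continuous f) (hfs : HasCompactSupport f) (hf0 : ∀ x, 0 ≤ f x)
    (hg : Continuous g) (hgs : HasCompactSupport g) (hg0 : ∀ x, 0 ≤ g x) :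
    ∫ x, f x * g x ≤ √(∫ x, f x ^ 2) * √(∫ x, g x ^ 2) := by
  have := integral_mul_le_Lp_mul_Lq_of_nonneg (μ := volume) Real.HolderConjugate.two_two
    (.of_forall hf0) (.of_forall hg0) (hf.memLp_of_hasCompactSupport hfs)
    (hg.memLp_of_hasCompactSupport hgs)
  simpa [Real.sqrt_eq_rpow] using this

lemma integral_damping_mul_sq_pd_le {a : EuclideanSpace ℝ (Fin d) → ℝ} (ha : ContDiff ℝ 1 a)
    {u : EuclideanSpace ℝ (Fin d) → ℂ} (hu : ContDiff ℝ 2 u) (hus : HasCompactSupport u)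
    (h : ℝ) :
    h * ∫ x, a x * ∑ i, ‖pd i u x‖ ^ 2 ≤ √(∫ x, ‖Ph h a u x‖ ^ 2) * √(∫ x, ‖u x‖ ^ 2) := by
  have hP := continuous_Ph ha hu h
  have hPs : HasCompactSupport (Ph h a u) :=
    HasCompactSupport.intro hus fun _ hx => Ph_eq_zero_of_notMem_tsupport h a hx
  have huc := hu.continuous
  have hac := ha.continuous
  have hpc (i : Fin d) := (hu.pd (m := 1) (by norm_num) i).continuous
  have hv : ContDiff ℝ 1 (fun y => conj (u y)) :=
    conjCLE.contDiff.comp (hu.of_le (by norm_num))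
  have key := integral_Ph_mul_eq ha hu hus hv h
  have hpconj (i : Fin d) (x) : pd i (fun y => conj (u y)) x = conj (pd i u x) :=
    pd_conj (hu.differentiable two_ne_zero x) i
  simp_rw [hpconj] at key
  have hL : Integrable fun x => Ph h a u x * conj (u x) :=
    (hP.mul hv.continuous).integrable_of_hasCompactSupport hPs.mul_right
  have hR : Integrable fun x =>
      (∑ i, ((h : ℂ) ^ 2 + I * h * a x) * pd i u x * conj (pd i u x)) - u x * conj (u x) := by
    refine Continuous.integrable_of_hasCompactSupport (by fun_prop)
      (HasCompactSupport.intro hus fun x hx => ?_)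
    simp [pd_eq_zero_of_notMem_tsupport _ hx, image_eq_zero_of_notMem_tsupport hx]
  have him (x) : (imCLM ((∑ i, ((h : ℂ) ^ 2 + I * h * a x) * pd i u x * conj (pd i u x)) -
      u x * conj (u x))) = h * (a x * ∑ i, ‖pd i u x‖ ^ 2) := by
    simp_rw [mul_assoc _ (pd _ u x), mul_conj, normSq_eq_norm_sq]
    rw [← Finset.mul_sum, ← ofReal_sum]
    simp [← ofReal_pow]
    ring
  have key' := congrArg imCLM key
  rw [← imCLM.integral_comp_comm hL, ← imCLM.integral_comp_comm hR] at key'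
  simp_rw [him] at key'
  rw [← integral_const_mul, ← key']
  refine le_trans ?_ (integral_mul_le_sqrt_mul_sqrt hP.norm hPs.norm (fun _ => norm_nonneg _)
    huc.norm hus.norm (fun _ => norm_nonneg _))
  refine integral_mono (imCLM.integrable_comp hL)
    ((hP.norm.mul huc.norm).integrable_of_hasCompactSupport hPs.norm.mul_right) fun x => ?_
  refine (le_abs_self _).trans ((abs_im_le_norm _).trans ?_)
  simp

lemma abs_fderiv_single_le {a : EuclideanSpace ℝ (Fin d) → ℝ} (x : EuclideanSpace ℝ (Fin d))
    (i : Fin d) : |fderiv ℝ a x (EuclideanSpace.single i 1)| ≤ ‖gradient a x‖ := by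
  rw [← inner_gradient_left]
  simpa using abs_real_inner_le_norm (gradient a x) (EuclideanSpace.single i (1 : ℝ))

lemma integral_damping_mul_sq_le {a : EuclideanSpace ℝ (Fin d) → ℝ} {C K : ℝ}
    (ha : ContDiff ℝ 1 a) (ha0 : ∀ x, 0 ≤ a x) (haC : ∀ x, a x ≤ C) (hK : 0 ≤ K)
    (haK : ∀ x, ‖gradient a x‖ ≤ K * √(a x))
    {u : EuclideanSpace ℝ (Fin d) → ℂ} (hu : ContDiff ℝ 2 u) (hus : HasCompactSupport u)
    {h : ℝ} (hh : 0 < h) :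
    ∫ x, a x * ‖u x‖ ^ 2 ≤ 2 * (h ^ 2 * ∫ x, a x * ∑ i, ‖pd i u x‖ ^ 2) +
      2 * (h ^ 2 * K * (√(d * ∫ x, a x * ∑ i, ‖pd i u x‖ ^ 2) * √(∫ x, ‖u x‖ ^ 2))) +
      2 * (h ^ 2 * K ^ 2 * C * (d * ∫ x, a x * ∑ i, ‖pd i u x‖ ^ 2)) +
      2 * (C * ∫ x, ‖Ph h a u x‖ ^ 2) := by
  have hP := continuous_Ph ha hu h
  have hP0 {x} (hx : x ∉ tsupport u) := Ph_eq_zero_of_notMem_tsupport h a hx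
  have hu0 {x} (hx : x ∉ tsupport u) := image_eq_zero_of_notMem_tsupport hx
  have hp0 {x} (hx : x ∉ tsupport u) (i : Fin d) := pd_eq_zero_of_notMem_tsupport i hx
  have huc := hu.continuous
  have hac := ha.continuous
  have hpc (i : Fin d) := (hu.pd (m := 1) (by norm_num) i).continuous
  have hac' := ha.continuous_fderiv one_ne_zero
  have hcc : ContDiff ℝ 1 (fun y => conj (u y)) :=
    conjCLE.contDiff.comp (hu.of_le (by norm_num))
  have hacc : ContDiff ℝ 1 (fun y => (a y : ℂ)) := ofRealCLM.contDiff.comp ha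
  have hv : ContDiff ℝ 1 (fun y => (a y : ℂ) * conj (u y)) := hacc.mul hcc
  have key := integral_Ph_mul_eq ha hu hus hv h
  have hpv (i : Fin d) (x) : pd i (fun y => (a y : ℂ) * conj (u y)) x =
      (fderiv ℝ a x (EuclideanSpace.single i 1) : ℝ) * conj (u x) + a x * conj (pd i u x) := by
    rw [pd_mul (hacc.differentiable one_ne_zero x) (hcc.differentiable one_ne_zero x),
      pd_ofReal (ha.differentiable one_ne_zero x), pd_conj (hu.differentiable two_ne_zero x)]
  simp_rw [hpv] at key
  set L : EuclideanSpace ℝ (Fin d) → ℂ := fun x => Ph h a u x * (a x * conj (u x)) with hLdef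
  set R : EuclideanSpace ℝ (Fin d) → ℂ := fun x =>
      (∑ i, ((h : ℂ) ^ 2 + I * h * a x) * pd i u x *
        ((fderiv ℝ a x (EuclideanSpace.single i 1) : ℝ) * conj (u x) + a x * conj (pd i u x))) -
      u x * (a x * conj (u x)) with hRdef
  have hL : Integrable L :=
    Continuous.integrable_of_hasCompactSupport (by fun_prop)
      (HasCompactSupport.intro hus fun x hx => by simp [hLdef, hu0 hx])
  have hR : Integrable R :=
    Continuous.integrable_of_hasCompactSupport (by fun_prop)
      (HasCompactSupport.intro hus fun x hx => by simp [hRdef, hu0 hx, hp0 hx])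
  have key' := congrArg reCLM key
  rw [← reCLM.integral_comp_comm hL, ← reCLM.integral_comp_comm hR] at key'
  set g : EuclideanSpace ℝ (Fin d) → ℝ := fun x => √(a x) * ∑ i, ‖pd i u x‖ with hgdef
  have hgc : Continuous g := by fun_prop
  have hgs : HasCompactSupport g :=
    HasCompactSupport.intro hus fun x hx => by simp [hgdef, hp0 hx]
  have hg0 (x) : 0 ≤ g x := by positivity
  have integrable_of {f : EuclideanSpace ℝ (Fin d) → ℝ} (hf : Continuous f)
      (hf0 : ∀ x, x ∉ tsupport u → f x = 0) : Integrable f :=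
    hf.integrable_of_hasCompactSupport (HasCompactSupport.intro hus hf0)
  have iA : Integrable fun x => a x * ‖u x‖ ^ 2 :=
    integrable_of (by fun_prop) fun x hx => by simp [hu0 hx]
  have iB : Integrable fun x => a x * ∑ i, ‖pd i u x‖ ^ 2 :=
    integrable_of (by fun_prop) fun x hx => by simp [hp0 hx]
  have iG : Integrable fun x => g x * ‖u x‖ :=
    integrable_of (by fun_prop) fun x hx => by simp [hu0 hx]
  have iG2 : Integrable fun x => g x ^ 2 :=
    integrable_of (by fun_prop) fun x hx => by simp [hgdef, hp0 hx]
  have iP : Integrable fun x => ‖Ph h a u x‖ ^ 2 :=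
    integrable_of (by fun_prop) fun x hx => by simp [hP0 hx]
  have hgB : ∫ x, g x ^ 2 ≤ d * ∫ x, a x * ∑ i, ‖pd i u x‖ ^ 2 := by
    rw [← integral_const_mul]
    refine integral_mono iG2 (iB.const_mul _) fun x => ?_
    have := sq_sum_le_card_mul_sum_sq (s := Finset.univ) (f := fun i => ‖pd i u x‖)
    simp only [Finset.card_univ, Fintype.card_fin] at this
    simp only [hgdef, mul_pow, Real.sq_sqrt (ha0 x)]
    nlinarith [mul_le_mul_of_nonneg_left this (ha0 x)]
  have hC : 0 ≤ C := (ha0 0).trans (haC 0)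
  have pointwise (x) : a x * ‖u x‖ ^ 2 + (R x).re - (L x).re ≤
      h ^ 2 * (a x * ∑ i, ‖pd i u x‖ ^ 2) + h ^ 2 * K * (g x * ‖u x‖) +
        h ^ 2 * K ^ 2 * C * g x ^ 2 + C * ‖Ph h a u x‖ ^ 2 + 2⁻¹ * (a x * ‖u x‖ ^ 2) := by
    set T : ℂ := ∑ i, ((h : ℂ) ^ 2 + I * h * a x) * pd i u x *
      ((fderiv ℝ a x (EuclideanSpace.single i 1) : ℝ) * conj (u x)) with hT
    have hRre : (R x).re = T.re + h ^ 2 * (a x * ∑ i, ‖pd i u x‖ ^ 2) - a x * ‖u x‖ ^ 2 := by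
      have h1 : R x = T + ((h : ℂ) ^ 2 + I * h * a x) * a x *
          ((∑ i, ‖pd i u x‖ ^ 2 : ℝ) : ℂ) - ((a x * ‖u x‖ ^ 2 : ℝ) : ℂ) := by
        simp only [hRdef, hT, mul_add, Finset.sum_add_distrib]
        push_cast
        simp_rw [← mul_conj', Finset.mul_sum]
        congr 1
        · congr 1
          exact Finset.sum_congr rfl fun i _ => by ring
        · ring
      rw [h1]
      simp [← ofReal_pow]
      ring
    have hTn : T.re ≤ (h ^ 2 + h * a x) * K * (g x * ‖u x‖) := by
      refine (re_le_norm T).trans ((norm_sum_le _ _).trans ?_)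
      have hc : ‖(h : ℂ) ^ 2 + I * h * a x‖ ≤ h ^ 2 + h * a x := by
        refine (norm_add_le _ _).trans_eq ?_
        simp [abs_of_pos hh, abs_of_nonneg (ha0 x)]
      have : (h ^ 2 + h * a x) * K * (g x * ‖u x‖) =
          ∑ i, (h ^ 2 + h * a x) * ‖pd i u x‖ * (K * √(a x) * ‖u x‖) := by
        simp only [hgdef]
        rw [← Finset.sum_mul, ← Finset.mul_sum]
        ring
      rw [this]
      refine Finset.sum_le_sum fun i _ => ?_
      simp only [norm_mul, norm_real, RCLike.norm_conj, Real.norm_eq_abs]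
      have := ha0 x
      gcongr
      exact (abs_fderiv_single_le x i).trans (haK x)
    have hLn : -(L x).re ≤ a x * (‖Ph h a u x‖ * ‖u x‖) := by
      refine (neg_le_abs _).trans ((abs_re_le_norm _).trans_eq ?_)
      simp [hLdef, abs_of_nonneg (ha0 x)]
      ring
    have h1 := mul_nonneg (ha0 x) (sq_nonneg (‖Ph h a u x‖ - ‖u x‖ / 2))
    have h2 := mul_nonneg (ha0 x) (sq_nonneg (h * K * g x - ‖u x‖ / 2))
    have h3 := mul_le_mul_of_nonneg_right (haC x) (sq_nonneg ‖Ph h a u x‖)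
    have h4 := mul_le_mul_of_nonneg_right (haC x) (sq_nonneg (h * K * g x))
    rw [hRre]
    linarith
  have int_le := integral_mono ((iA.add (reCLM.integrable_comp hR)).sub (reCLM.integrable_comp hL))
    ((((((iB.const_mul (h ^ 2)).add (iG.const_mul (h ^ 2 * K))).add
      (iG2.const_mul (h ^ 2 * K ^ 2 * C)))).add (iP.const_mul C)).add (iA.const_mul 2⁻¹)) pointwise
  rw [integral_sub' (iA.add (reCLM.integrable_comp hR)) (reCLM.integrable_comp hL),
    integral_add' iA (reCLM.integrable_comp hR), key', add_sub_cancel_right,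
    integral_add' ((((iB.const_mul (h ^ 2)).add (iG.const_mul (h ^ 2 * K))).add
      (iG2.const_mul (h ^ 2 * K ^ 2 * C))).add (iP.const_mul C)) (iA.const_mul 2⁻¹),
    integral_add' (((iB.const_mul (h ^ 2)).add (iG.const_mul (h ^ 2 * K))).add
      (iG2.const_mul (h ^ 2 * K ^ 2 * C))) (iP.const_mul C),
    integral_add' ((iB.const_mul (h ^ 2)).add (iG.const_mul (h ^ 2 * K)))
      (iG2.const_mul (h ^ 2 * K ^ 2 * C)),
    integral_add' (iB.const_mul (h ^ 2)) (iG.const_mul (h ^ 2 * K))] at int_le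
  simp only [integral_const_mul] at int_le
  have cs := integral_mul_le_sqrt_mul_sqrt hgc hgs hg0 huc.norm hus.norm fun _ => norm_nonneg _
  have cs' := cs.trans (mul_le_mul_of_nonneg_right (Real.sqrt_le_sqrt hgB) (Real.sqrt_nonneg _))
  have e1 := mul_le_mul_of_nonneg_left cs' (by positivity : 0 ≤ h ^ 2 * K)
  have e2 := mul_le_mul_of_nonneg_left hgB (by positivity : 0 ≤ h ^ 2 * K ^ 2 * C)
  linarith

lemma sq_one_sub_le_mul_of_bounded {χ : ℝ → ℝ} {M z : ℝ} (hχ1 : ∀ z : ℝ, |z| ≤ 1 → χ z = 1)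
    (hM : ∀ z, |1 - χ z| ≤ M) (hz : 0 ≤ z) : (1 - χ z) ^ 2 ≤ M ^ 2 * z := by
  rcases le_total z 1 with h1 | h1
  · rw [hχ1 z (by rwa [abs_of_nonneg hz])]
    simpa using mul_nonneg (sq_nonneg M) hz
  · have := sq_le_sq' (neg_le_of_abs_le (hM z)) (le_of_abs_le (hM z))
    nlinarith [sq_nonneg M]

lemma norm_sq_pd_cutoff_mul_le {a : EuclideanSpace ℝ (Fin d) → ℝ} {K M h : ℝ}
    (ha : ContDiff ℝ 1 a) (ha0 : ∀ x, 0 ≤ a x) (haK : ∀ x, ‖gradient a x‖ ≤ K * √(a x))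
    {u : EuclideanSpace ℝ (Fin d) → ℂ} (hu : Differentiable ℝ u) (hh : 0 < h)
    {χ : ℝ → ℝ} (hχ : Differentiable ℝ χ) (hχ1 : ∀ z : ℝ, |z| ≤ 1 → χ z = 1)
    (hM : ∀ z, |1 - χ z| ≤ M) (hM' : ∀ z, |deriv χ z| ≤ M)
    (x : EuclideanSpace ℝ (Fin d)) (i : Fin d) :
    ‖(h : ℂ) * pd i (fun y => ((1 - χ (a y / h) : ℝ) : ℂ) * u y) x‖ ^ 2 ≤
      2 * (M ^ 2 * K ^ 2) * (a x * ‖u x‖ ^ 2) + 2 * (M ^ 2 * h) * (a x * ‖pd i u x‖ ^ 2) := by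
  have had : DifferentiableAt ℝ a x := ha.differentiable one_ne_zero x
  have hφ : HasFDerivAt (fun y => 1 - χ (a y / h))
      (-(deriv χ (a x / h) • (h⁻¹ • fderiv ℝ a x))) x := by
    have h1 : HasFDerivAt (fun y => a y / h) (h⁻¹ • fderiv ℝ a x) x := by
      simpa [div_eq_mul_inv] using had.hasFDerivAt.mul_const h⁻¹
    exact ((hχ (a x / h)).hasDerivAt.comp_hasFDerivAt x h1).const_sub 1
  have hφc : DifferentiableAt ℝ (fun y => ((1 - χ (a y / h) : ℝ) : ℂ)) x :=
    ofRealCLM.differentiableAt.comp x hφ.differentiableAt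
  rw [pd_mul hφc (hu x), pd_ofReal hφ.differentiableAt, hφ.fderiv]
  set b := fderiv ℝ a x (EuclideanSpace.single i 1) with hb
  have hb2 : b ^ 2 ≤ K ^ 2 * a x := by
    have h1 := (abs_fderiv_single_le (a := a) x i).trans (haK x)
    calc b ^ 2 = |b| ^ 2 := (sq_abs b).symm
      _ ≤ (K * √(a x)) ^ 2 := by gcongr
      _ = K ^ 2 * a x := by rw [mul_pow, Real.sq_sqrt (ha0 x)]
  have hd2 : deriv χ (a x / h) ^ 2 ≤ M ^ 2 :=
    sq_le_sq' (neg_le_of_abs_le (hM' _)) (le_of_abs_le (hM' _))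
  have hc2 := sq_one_sub_le_mul_of_bounded hχ1 hM (div_nonneg (ha0 x) hh.le)
  have hsq (p q : ℂ) : ‖p + q‖ ^ 2 ≤ 2 * ‖p‖ ^ 2 + 2 * ‖q‖ ^ 2 := by
    nlinarith [norm_add_le p q, norm_nonneg (p + q), sq_nonneg (‖p‖ - ‖q‖)]
  rw [mul_add]
  refine (hsq _ _).trans (add_le_add ?_ ?_)
  · have h1 : ‖(h : ℂ) * (((-(deriv χ (a x / h) • (h⁻¹ • fderiv ℝ a x)))
        (EuclideanSpace.single i 1) : ℝ) * u x)‖ ^ 2 =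
        deriv χ (a x / h) ^ 2 * b ^ 2 * ‖u x‖ ^ 2 := by
      simp only [norm_mul, norm_real, Real.norm_eq_abs, mul_pow, sq_abs, neg_apply, smul_apply,
        smul_eq_mul, neg_sq, ← hb]
      field_simp
    rw [h1]
    have := mul_le_mul hd2 hb2 (sq_nonneg b) (sq_nonneg M)
    nlinarith [mul_le_mul_of_nonneg_right this (sq_nonneg ‖u x‖)]
  · have h1 : ‖(h : ℂ) * (((1 - χ (a x / h) : ℝ) : ℂ) * pd i u x)‖ ^ 2 =
        h ^ 2 * (1 - χ (a x / h)) ^ 2 * ‖pd i u x‖ ^ 2 := by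
      simp only [norm_mul, norm_real, Real.norm_eq_abs, mul_pow, sq_abs]
      ring
    have h2 : h ^ 2 * (1 - χ (a x / h)) ^ 2 ≤ M ^ 2 * h * a x := by
      calc h ^ 2 * (1 - χ (a x / h)) ^ 2 ≤ h ^ 2 * (M ^ 2 * (a x / h)) := by gcongr
        _ = M ^ 2 * h * a x := by field_simp
    rw [h1]
    nlinarith [mul_le_mul_of_nonneg_right h2 (sq_nonneg ‖pd i u x‖)]

end KelvinVoigtEstimates

lemma isLittleO_of_le_mul_tendsto_zero {X h η : ℕ → ℝ} (hX : ∀ n, 0 ≤ X n) (hh : ∀ n, 0 < h n)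
    (hη : Tendsto η atTop (nhds 0)) (hle : ∀ n, X n ≤ h n * η n) : X =o[atTop] h := by
  rw [isLittleO_iff_tendsto fun n hn => absurd hn (hh n).ne']
  refine squeeze_zero (fun n => div_nonneg (hX n) (hh n).le) (fun n => ?_) hη
  rw [div_le_iff₀' (hh n)]
  exact hle n

lemma sqrt_isLittleO_sqrt_of_le_mul_tendsto_zero {X h η : ℕ → ℝ} (hh : ∀ n, 0 < h n)
    (hη : Tendsto η atTop (nhds 0)) (hle : ∀ n, X n ≤ h n * η n) :
    (fun n => √(X n)) =o[atTop] fun n => √(h n) := by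
  refine isLittleO_of_le_mul_tendsto_zero (fun _ => Real.sqrt_nonneg _)
    (fun n => Real.sqrt_pos.2 (hh n)) (by simpa using hη.sqrt) fun n => ?_
  rw [← Real.sqrt_mul (hh n).le]
  exact Real.sqrt_le_sqrt (hle n)

/-- **Lemma 3.4, first part, of the paper**: for a contradiction sequence and a cutoff
`χ` (equal to `1` on `[-1,1]`, vanishing outside `[-2,2]`), the truncation
`w_n = (1 - χ(a/h_n)) u_n` to the region `a ≳ h_n` satisfies
(i) `‖w_n‖_{L²} + ‖h_n∇w_n‖_{L²} = o(h_n^{1/2})`, and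
(ii) for every `c > 0`, `∫_{a ≥ c h_n} (|u_n|² + ‖h_n∇u_n‖²) = o(h_n)`. -/
theorem stmt_7 (d : ℕ) (hd : 1 ≤ d)
    (a : EuclideanSpace ℝ (Fin d) → ℝ) (K : ℝ)
    (haC1 : ContDiff ℝ 1 a) (habd : ∃ C, ∀ x, a x ≤ C) (hapos : ∀ x, 0 ≤ a x)
    (haK : ∀ x, ‖gradient a x‖ ≤ K * Real.sqrt (a x))
    (h : ℕ → ℝ) (u : ℕ → EuclideanSpace ℝ (Fin d) → ℂ)
    (hhpos : ∀ n, 0 < h n) (hh0 : Tendsto h atTop (nhds 0))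
    (husm : ∀ n, ContDiff ℝ (⊤ : ℕ∞) (u n)) (husupp : ∀ n, HasCompactSupport (u n))
    (hunorm : ∀ n, (∫ x, ‖u n x‖ ^ 2) = 1)
    (hf : (fun n => Real.sqrt (∫ x, ‖Ph (h n) a (u n) x‖ ^ 2)) =o[atTop] h)
    (χ : ℝ → ℝ) (hχ : ContDiff ℝ (⊤ : ℕ∞) χ) (hχsupp : HasCompactSupport χ)
    (hχ1 : ∀ z : ℝ, |z| ≤ 1 → χ z = 1) (hχ0 : ∀ z : ℝ, 2 ≤ |z| → χ z = 0) :
    ((fun n => Real.sqrt (∫ x, ‖((1 - χ (a x / h n) : ℝ) : ℂ) * u n x‖ ^ 2)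
        + Real.sqrt (∫ x, ∑ i : Fin d,
            ‖(h n : ℂ) * pd i (fun y => ((1 - χ (a y / h n) : ℝ) : ℂ) * u n y) x‖ ^ 2))
      =o[atTop] (fun n => Real.sqrt (h n))) ∧
    (∀ c : ℝ, 0 < c →
      (fun n => ∫ x in {x | c * h n ≤ a x},
          (‖u n x‖ ^ 2 + ∑ i : Fin d, ‖(h n : ℂ) * pd i (u n) x‖ ^ 2)) =o[atTop] h) := by
  obtain ⟨C, haC⟩ := habd
  have hC : 0 ≤ C := (hapos 0).trans (haC 0)
  have haK' (x) : ‖gradient a x‖ ≤ |K| * √(a x) :=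
    (haK x).trans (mul_le_mul_of_nonneg_right (le_abs_self K) (Real.sqrt_nonneg _))
  have hu2 (n) : ContDiff ℝ 2 (u n) := contDiff_infty.1 (husm n) 2
  have hac := haC1.continuous
  have huc (n) := (hu2 n).continuous
  have hpc (n) (i : Fin d) := ((hu2 n).pd (m := 1) (by norm_num) i).continuous
  set F : ℕ → ℝ := fun n => √(∫ x, ‖Ph (h n) a (u n) x‖ ^ 2) with hF
  set A : ℕ → ℝ := fun n => ∫ x, a x * ‖u n x‖ ^ 2 with hA
  set B : ℕ → ℝ := fun n => ∫ x, a x * ∑ i, ‖pd i (u n) x‖ ^ 2 with hB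
  set ε : ℕ → ℝ := fun n => F n / h n with hε
  have hε0 : Tendsto ε atTop (nhds 0) := hf.tendsto_div_nhds_zero
  set η : ℕ → ℝ := fun n => 2 * ε n + 2 * (|K| * √(d * ε n)) + 2 * (|K| ^ 2 * C * (d * ε n)) +
    2 * (C * ε n ^ 2) with hη
  have hη0 : Tendsto η atTop (nhds 0) := by
    have : Continuous fun t : ℝ => 2 * t + 2 * (|K| * √(d * t)) + 2 * (|K| ^ 2 * C * (d * t)) +
      2 * (C * t ^ 2) := by fun_prop
    exact (this.tendsto' 0 0 (by simp)).comp hε0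
  have iA (n) : Integrable fun x => a x * ‖u n x‖ ^ 2 :=
    Continuous.integrable_of_hasCompactSupport (by fun_prop)
      (HasCompactSupport.intro (husupp n) fun x hx => by simp [image_eq_zero_of_notMem_tsupport hx])
  have iBi (n) (i : Fin d) : Integrable fun x => a x * ‖pd i (u n) x‖ ^ 2 :=
    Continuous.integrable_of_hasCompactSupport (by fun_prop)
      (HasCompactSupport.intro (husupp n) fun x hx => by simp [pd_eq_zero_of_notMem_tsupport _ hx])
  have iB (n) : Integrable fun x => a x * ∑ i, ‖pd i (u n) x‖ ^ 2 := by
    simp_rw [Finset.mul_sum]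
    exact integrable_finsetSum _ fun i _ => iBi n i
  have hBε (n) : B n ≤ ε n := by
    rw [hε, le_div_iff₀' (hhpos n)]
    simpa [hunorm n] using integral_damping_mul_sq_pd_le haC1 (hu2 n) (husupp n) (h n)
  have hAη (n) : A n ≤ h n ^ 2 * η n := by
    have h1 := integral_damping_mul_sq_le haC1 hapos haC (abs_nonneg K) haK' (hu2 n) (husupp n)
      (hhpos n)
    rw [hunorm n, Real.sqrt_one, mul_one] at h1
    have hF2 : ∫ x, ‖Ph (h n) a (u n) x‖ ^ 2 = h n ^ 2 * ε n ^ 2 := by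
      rw [← mul_pow, hε, mul_div_cancel₀ _ (hhpos n).ne', hF,
        Real.sq_sqrt (integral_nonneg fun x => by positivity)]
    rw [hF2] at h1
    have h2 := hBε n
    calc A n ≤ 2 * (h n ^ 2 * B n) + 2 * (h n ^ 2 * |K| * √(d * B n)) +
          2 * (h n ^ 2 * |K| ^ 2 * C * (d * B n)) + 2 * (C * (h n ^ 2 * ε n ^ 2)) := h1
      _ ≤ 2 * (h n ^ 2 * ε n) + 2 * (h n ^ 2 * |K| * √(d * ε n)) +
          2 * (h n ^ 2 * |K| ^ 2 * C * (d * ε n)) + 2 * (C * (h n ^ 2 * ε n ^ 2)) := by gcongr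
      _ = h n ^ 2 * η n := by rw [hη]; ring
  constructor
  · obtain ⟨M₁, hM₁⟩ := hχsupp.exists_bound_of_continuous hχ.continuous
    obtain ⟨M₂, hM₂⟩ := hχsupp.deriv.exists_bound_of_continuous (hχ.continuous_deriv (by simp))
    have hM₁0 := (norm_nonneg _).trans (hM₁ 0)
    have hM₂0 := (norm_nonneg _).trans (hM₂ 0)
    set M := 1 + M₁ + M₂ with hM
    have hM1 (z) : |1 - χ z| ≤ M := by
      have h1 := abs_sub (1 : ℝ) (χ z)
      have h2 := hM₁ z
      rw [Real.norm_eq_abs] at h2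
      rw [abs_one] at h1
      linarith
    have hM2 (z) : |deriv χ z| ≤ M := (hM₂ z).trans (by linarith)
    refine IsLittleO.add
      (sqrt_isLittleO_sqrt_of_le_mul_tendsto_zero (η := fun n => M ^ 2 * η n) hhpos
        (by simpa using hη0.const_mul (M ^ 2)) fun n => ?_)
      (sqrt_isLittleO_sqrt_of_le_mul_tendsto_zero
        (η := fun n => d * (2 * (M ^ 2 * |K| ^ 2)) * (h n * η n) + 2 * M ^ 2 * ε n) hhpos ?_
        fun n => ?_)
    · have hn := hhpos n
      calc ∫ x, ‖((1 - χ (a x / h n) : ℝ) : ℂ) * u n x‖ ^ 2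
          ≤ ∫ x, M ^ 2 / h n * (a x * ‖u n x‖ ^ 2) := by
            refine integral_mono_of_nonneg (.of_forall fun x => by positivity)
              ((iA n).const_mul _) (.of_forall fun x => ?_)
            have := sq_one_sub_le_mul_of_bounded hχ1 hM1 (div_nonneg (hapos x) hn.le)
            simp only [norm_mul, norm_real, Real.norm_eq_abs, mul_pow, sq_abs]
            refine (mul_le_mul_of_nonneg_right this (sq_nonneg _)).trans_eq ?_
            ring
        _ = M ^ 2 / h n * A n := integral_const_mul _ _
        _ ≤ M ^ 2 / h n * (h n ^ 2 * η n) := by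
            gcongr
            exact hAη n
        _ = h n * (M ^ 2 * η n) := by field_simp
    · simpa [-sq_abs] using ((hh0.mul hη0).const_mul (d * (2 * (M ^ 2 * |K| ^ 2)))).add
        (hε0.const_mul (2 * M ^ 2))
    · have hn := hhpos n
      calc ∫ x, ∑ i : Fin d,
            ‖(h n : ℂ) * pd i (fun y => ((1 - χ (a y / h n) : ℝ) : ℂ) * u n y) x‖ ^ 2
          ≤ ∫ x, (d * (2 * (M ^ 2 * |K| ^ 2)) * (a x * ‖u n x‖ ^ 2) +
              2 * (M ^ 2 * h n) * (a x * ∑ i, ‖pd i (u n) x‖ ^ 2)) := by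
            refine integral_mono_of_nonneg (.of_forall fun x => by positivity)
              (((iA n).const_mul _).add ((iB n).const_mul _)) (.of_forall fun x => ?_)
            refine (Finset.sum_le_sum fun i _ => norm_sq_pd_cutoff_mul_le haC1 hapos haK'
              ((hu2 n).differentiable two_ne_zero) hn (hχ.differentiable (by simp)) hχ1 hM1 hM2
              x i).trans_eq ?_
            simp only [Finset.sum_add_distrib, ← Finset.mul_sum, Finset.sum_const,
              Finset.card_univ, Fintype.card_fin, nsmul_eq_mul]
            ring
        _ = d * (2 * (M ^ 2 * |K| ^ 2)) * A n + 2 * (M ^ 2 * h n) * B n := by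
            rw [integral_add ((iA n).const_mul _) ((iB n).const_mul _), integral_const_mul,
              integral_const_mul]
        _ ≤ d * (2 * (M ^ 2 * |K| ^ 2)) * (h n ^ 2 * η n) + 2 * (M ^ 2 * h n) * ε n := by
            gcongr
            · exact hAη n
            · exact hBε n
        _ = h n * (d * (2 * (M ^ 2 * |K| ^ 2)) * (h n * η n) + 2 * M ^ 2 * ε n) := by ring
  · intro c hc
    refine isLittleO_of_le_mul_tendsto_zero (η := fun n => c⁻¹ * (η n + ε n))
      (fun n => integral_nonneg fun x => by positivity) hhpos
      (by simpa using (hη0.add hε0).const_mul c⁻¹) fun n => ?_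
    have hn := hhpos n
    have iG : Integrable fun x =>
        (c * h n)⁻¹ * (a x * ‖u n x‖ ^ 2 + h n ^ 2 * (a x * ∑ i, ‖pd i (u n) x‖ ^ 2)) :=
      ((iA n).add ((iB n).const_mul _)).const_mul _
    have hnonneg (x) : 0 ≤
        (c * h n)⁻¹ * (a x * ‖u n x‖ ^ 2 + h n ^ 2 * (a x * ∑ i, ‖pd i (u n) x‖ ^ 2)) := by
      have := hapos x
      positivity
    calc ∫ x in {x | c * h n ≤ a x},
          (‖u n x‖ ^ 2 + ∑ i : Fin d, ‖(h n : ℂ) * pd i (u n) x‖ ^ 2)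
        ≤ ∫ x in {x | c * h n ≤ a x},
            (c * h n)⁻¹ * (a x * ‖u n x‖ ^ 2 + h n ^ 2 * (a x * ∑ i, ‖pd i (u n) x‖ ^ 2)) := by
          refine integral_mono_of_nonneg (.of_forall fun x => by positivity) iG.integrableOn
            (ae_restrict_of_forall_mem (isClosed_le continuous_const hac).measurableSet
              fun x hx => ?_)
          simp only [norm_mul, norm_real, Real.norm_eq_abs, mul_pow, sq_abs, ← Finset.mul_sum]
          rw [inv_mul_eq_div, le_div_iff₀' (by positivity)]
          refine (mul_le_mul_of_nonneg_right (show c * h n ≤ a x from hx) (by positivity)).trans_eq ?_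
          ring
      _ ≤ ∫ x, (c * h n)⁻¹ *
            (a x * ‖u n x‖ ^ 2 + h n ^ 2 * (a x * ∑ i, ‖pd i (u n) x‖ ^ 2)) :=
          setIntegral_le_integral iG (.of_forall hnonneg)
      _ = (c * h n)⁻¹ * (A n + h n ^ 2 * B n) := by
          rw [integral_const_mul, integral_add (iA n) ((iB n).const_mul _), integral_const_mul]
      _ ≤ (c * h n)⁻¹ * (h n ^ 2 * η n + h n ^ 2 * ε n) := by
          gcongr
          · exact hAη n
          · exact hBε n
      _ = h n * (c⁻¹ * (η n + ε n)) := by field_simp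

end
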